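/- arXiv:1510.00354 — 3 statements merged into one kernel-verified Lean document; each statement's English description precedes it below -/
import Mathlib

section
/- For every even integer k ≥ 2 there exists a sequence (f_v)_{v ∈ ℕ}, where f_v is a k-uniform hypergraph property on v vertices, together with constants c, C > 0 and v₀ ∈ ℕ, such that for all v ≥ v₀: s(f_v) ≤ C·v^{k/2}, s(f_v) ≥ c·v^{k/2}, and bs(f_v) ≥ c·v^k; consequently bs(f_v) ≥ c'·s(f_v)² for some constant c' > 0 and all v ≥ v₀, i.e., there is a k-uniform hypergraph property exhibiting a quadratic gap between sensitivity and block sensitivity. -/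
open Finset

/-- The coordinate set: `k`-element subsets of `Fin v`. -/
abbrev KSet (v k : ℕ) : Type := {S : Finset (Fin v) // S.card = k}

/-- A `k`-uniform hypergraph on `Fin v`: a Boolean function on `k`-sets. -/
abbrev HGraph (v k : ℕ) : Type := KSet v k → Bool

/-- Sensitivity of `f` at input `x`: the number of coordinates whose flip changes `f`. -/
def localSens {I : Type} [Fintype I] [DecidableEq I]
    (f : (I → Bool) → Bool) (x : I → Bool) : ℕ :=
  (Finset.univ.filter fun i => f (Function.update x i (!x i)) ≠ f x).card

/-- Sensitivity of `f`: maximum of `localSens f x` over all inputs `x`. -/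
def sens {I : Type} [Fintype I] [DecidableEq I] (f : (I → Bool) → Bool) : ℕ :=
  Finset.univ.sup (localSens f)

/-- `sensOn b f` is `s^b(f)`: max sensitivity over inputs with `f x = b`. -/
def sensOn {I : Type} [Fintype I] [DecidableEq I] (b : Bool) (f : (I → Bool) → Bool) : ℕ :=
  (Finset.univ.filter fun x => f x = b).sup (localSens f)

/-- Flip all the coordinates of `x` in the block `B`. -/
def flipBlock {I : Type} [DecidableEq I] (x : I → Bool) (B : Finset I) : I → Bool :=
  fun i => if i ∈ B then !x i else x i

/-- Block sensitivity of `f` at `x`: maximum number of pairwise disjoint sensitive blocks. -/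
noncomputable def localBlockSens {I : Type} [Fintype I] [DecidableEq I]
    (f : (I → Bool) → Bool) (x : I → Bool) : ℕ :=
  sSup {n : ℕ | ∃ B : Fin n → Finset I,
    (∀ j, f (flipBlock x (B j)) ≠ f x) ∧
    ∀ j j', j ≠ j' → Disjoint (B j) (B j')}

/-- Block sensitivity of `f`. -/
noncomputable def blockSens {I : Type} [Fintype I] [DecidableEq I]
    (f : (I → Bool) → Bool) : ℕ :=
  Finset.univ.sup (localBlockSens f)

/-- Image of a `k`-set under a permutation of the vertices. -/
def permKSet {v k : ℕ} (σ : Equiv.Perm (Fin v)) (S : KSet v k) : KSet v k :=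
  ⟨S.1.map σ.toEmbedding, by rw [Finset.card_map]; exact S.2⟩

/-- A `k`-uniform hypergraph property: invariance under all vertex permutations,
where `(σ • G) S = G (σ⁻¹ S)`. -/
def IsHypergraphProperty {v k : ℕ} (f : HGraph v k → Bool) : Prop :=
  ∀ (σ : Equiv.Perm (Fin v)) (G : HGraph v k),
    f (fun S => G (permKSet σ⁻¹ S)) = f G

/-!
Call a `(k + 1)`-set `T` a `t`-isolated clique of `G` if all `k`-subsets of `T` are edges and no
other edge meets `T` in `t` or more vertices; the property is that `G` has such a clique.

* If `G` has an isolated clique `T`, only the `O(v ^ (k - t))` coordinates meeting `T` in at least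
  `t` vertices can be sensitive. When `G` is a single clique, the non-edges meeting it in exactly
  `t` vertices are sensitive, so the order is attained.
* If `G` has none, a sensitive `e` comes with a clique `T e` that becomes isolated by flipping `e`.
  Pick a `t`-subset `A e` of `T e` not contained in `e`. Cliques through a common `A` obstruct each
  other: if `T e ≠ T e'` and `A e = A e'`, then `e' ⊆ T e`. So `A` is at most `(k + 2)`-to-one,
  and `G` has `O(v ^ t)` sensitive coordinates.
* Two `(k + 1)`-sets with the same vertex sum modulo `v` share no `k`-subset. Some residue class
  therefore yields `Ω(v ^ k)` disjoint blocks, each of which turns the empty hypergraph into a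
  clique.

The choice `t = k / 2` balances the first two bounds. For odd `k` the larger of them is still
`v ^ ((k + 1) / 2)`, which costs a factor `v` in the quadratic gap.
-/

section BlockSensitivity

variable {I : Type} [Fintype I] [DecidableEq I] {f : (I → Bool) → Bool} {x : I → Bool}

lemma card_le_card_of_pairwise_disjoint_sensitive {ι : Type*} [Fintype ι] {B : ι → Finset I}
    (hB : ∀ j, f (flipBlock x (B j)) ≠ f x) (hdisj : Pairwise (Function.onFun Disjoint B)) :
    Fintype.card ι ≤ Fintype.card I := by
  have hnonempty : ∀ j, (B j).Nonempty := fun j => by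
    by_contra hj
    refine hB j (congrArg f (funext fun i => ?_))
    simp [flipBlock, not_nonempty_iff_eq_empty.1 hj]
  choose g hg using hnonempty
  refine Fintype.card_le_of_injective g fun i j hij => ?_
  by_contra hne
  exact disjoint_left.1 (hdisj hne) (hg i) (hij ▸ hg j)

lemma card_le_blockSens {ι : Type*} {F : Finset ι} {B : ι → Finset I}
    (hB : ∀ j ∈ F, f (flipBlock x (B j)) ≠ f x) (hdisj : (F : Set ι).PairwiseDisjoint B) :
    #F ≤ blockSens f := by
  refine le_trans ?_ (le_sup (f := localBlockSens f) (mem_univ x))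
  refine le_csSup ⟨Fintype.card I, ?_⟩ ?_
  · rintro n ⟨C, hC, hCdisj⟩
    simpa using card_le_card_of_pairwise_disjoint_sensitive hC fun i j => hCdisj i j
  · refine ⟨fun j => B (F.equivFin.symm j), fun j => hB _ (F.equivFin.symm j).2, fun i j hij => ?_⟩
    refine hdisj (F.equivFin.symm i).2 (F.equivFin.symm j).2 fun h => hij ?_
    exact F.equivFin.symm.injective (Subtype.ext h)

end BlockSensitivity

section Counting

variable {v k : ℕ}

lemma card_kSet_subset_le (T : Finset (Fin v)) :
    #{S : KSet v k | S.1 ⊆ T} ≤ (#T).choose k := by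
  rw [← card_powersetCard]
  refine card_le_card_of_injOn Subtype.val (fun S hS => ?_) Subtype.val_injective.injOn
  simpa [mem_powersetCard, S.2] using hS

lemma card_kSet_le_card_inter_le (t : ℕ) (T : Finset (Fin v)) :
    #{S : KSet v k | t ≤ #(S.1 ∩ T)} ≤ (#T).choose t * v.choose (k - t) := by
  calc #{S : KSet v k | t ≤ #(S.1 ∩ T)}
      ≤ #((powersetCard t T ×ˢ powersetCard (k - t) univ).image fun p => p.1 ∪ p.2) := by
        refine card_le_card_of_injOn Subtype.val (fun S hS => ?_) Subtype.val_injective.injOn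
        obtain ⟨A, hA, hcard⟩ := exists_subset_card_eq (mem_filter.1 hS).2
        obtain ⟨hAS, hAT⟩ := subset_inter_iff.1 hA
        refine mem_image.2 ⟨(A, S.1 \ A), ?_, union_sdiff_of_subset hAS⟩
        simp [mem_powersetCard, hAT, hcard, card_sdiff_of_subset hAS, S.2]
    _ ≤ _ := card_image_le
    _ = (#T).choose t * v.choose (k - t) := by simp

lemma eq_of_sum_eq_of_subset {M : Type*} [AddCommMonoid M] [IsCancelAdd M] {S T T' : Finset M}
    (hT : #T = #S + 1) (hT' : #T' = #S + 1) (hS : S ⊆ T) (hS' : S ⊆ T')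
    (hsum : ∑ i ∈ T, i = ∑ i ∈ T', i) : T = T' := by
  classical
  obtain ⟨a, ha, rfl⟩ := exists_eq_insert_iff.2 ⟨hS, hT.symm⟩
  obtain ⟨b, hb, rfl⟩ := exists_eq_insert_iff.2 ⟨hS', hT'.symm⟩
  rw [sum_insert ha, sum_insert hb] at hsum
  rw [add_right_cancel hsum]

lemma pow_le_mul_choose {n r w : ℕ} (h : w ≤ 2 * (n + 1 - r)) :
    w ^ r ≤ 2 ^ r * r.factorial * n.choose r := by
  calc w ^ r ≤ (2 * (n + 1 - r)) ^ r := Nat.pow_le_pow_left h r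
    _ = 2 ^ r * (n + 1 - r) ^ r := mul_pow _ _ _
    _ ≤ 2 ^ r * (r.factorial * n.choose r) := by
      gcongr
      exact (Nat.pow_sub_le_descFactorial n r).trans_eq
        (Nat.descFactorial_eq_factorial_mul_choose n r)
    _ = 2 ^ r * r.factorial * n.choose r := (mul_assoc _ _ _).symm

end Counting

section IsolatedCliques

variable {v k t : ℕ} {G : HGraph v k} {e e' : KSet v k} {b b' : Bool} {A T T' : Finset (Fin v)}

/-- `T` is a `t`-isolated clique of `G`: a clique on `k + 1` vertices such that no edge other than
its own meets it in `t` or more vertices. For `t ≤ k`, the equivalence `edge_iff` covers the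
`k`-subsets of `T` themselves, so it also expresses that `T` is a clique. -/
structure IsIsolatedClique (t : ℕ) (G : HGraph v k) (T : Finset (Fin v)) : Prop where
  card_eq : #T = k + 1
  edge_iff : ∀ S : KSet v k, t ≤ #(S.1 ∩ T) → (G S = true ↔ S.1 ⊆ T)

open Classical in
/-- The hypergraph property of having a `t`-isolated clique, which separates sensitivity from
block sensitivity. -/
noncomputable def hasIsolatedClique (t : ℕ) (G : HGraph v k) : Bool :=
  decide (∃ T, IsIsolatedClique t G T)

/-- The hypergraph consisting of a single clique, with vertex set `T`. -/
def cliqueOn (T : Finset (Fin v)) : HGraph v k := fun S => decide (S.1 ⊆ T)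

lemma hasIsolatedClique_eq_true : hasIsolatedClique t G = true ↔ ∃ T, IsIsolatedClique t G T := by
  simp [hasIsolatedClique]

lemma hasIsolatedClique_eq_false :
    hasIsolatedClique t G = false ↔ ∀ T, ¬ IsIsolatedClique t G T := by
  simp [hasIsolatedClique]

lemma isIsolatedClique_cliqueOn (hT : #T = k + 1) :
    IsIsolatedClique t (cliqueOn T : HGraph v k) T :=
  ⟨hT, fun S _ => by simp [cliqueOn]⟩

lemma permKSet_permKSet_inv (σ : Equiv.Perm (Fin v)) (S : KSet v k) :
    permKSet σ (permKSet σ⁻¹ S) = S := by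
  ext x
  simp [permKSet, Equiv.Perm.inv_def]

namespace IsIsolatedClique

lemma perm (hT : IsIsolatedClique t G T) (σ : Equiv.Perm (Fin v)) :
    IsIsolatedClique t (fun S => G (permKSet σ⁻¹ S)) (T.map σ.toEmbedding) := by
  refine ⟨by rw [card_map, hT.card_eq], fun S hS => ?_⟩
  have hmap : S.1 = (permKSet σ⁻¹ S).1.map σ.toEmbedding :=
    congrArg Subtype.val (permKSet_permKSet_inv σ S).symm
  rw [hmap, ← map_inter, card_map] at hS
  rw [hT.edge_iff _ hS, hmap, map_subset_map]

lemma edge_iff_of_update (hT : IsIsolatedClique t (Function.update G e b) T) {S : KSet v k}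
    (hSe : S ≠ e) (hS : t ≤ #(S.1 ∩ T)) : G S = true ↔ S.1 ⊆ T := by
  simpa [hSe] using hT.edge_iff S hS

lemma le_card_inter_of_update_eq_false (hT : IsIsolatedClique t G T)
    (he : hasIsolatedClique t (Function.update G e b) = false) : t ≤ #(e.1 ∩ T) := by
  by_contra hsmall
  refine hasIsolatedClique_eq_false.1 he T ⟨hT.card_eq, fun S hS => ?_⟩
  have hSe : S ≠ e := fun h => hsmall (h ▸ hS)
  simpa [hSe] using hT.edge_iff S hS

lemma eq_of_update_of_update (hT : IsIsolatedClique t (Function.update G e b) T)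
    (hT' : IsIsolatedClique t (Function.update G e' b') T) (hG : ¬ IsIsolatedClique t G T) :
    e = e' := by
  by_contra hne
  refine hG ⟨hT.card_eq, fun S hS => ?_⟩
  by_cases hSe : S = e
  · exact hT'.edge_iff_of_update (hSe ▸ hne) hS
  · exact hT.edge_iff_of_update hSe hS

lemma exists_edge_of_update (hT : IsIsolatedClique t (Function.update G e b) T) (htk : t ≤ k)
    (hAT : A ⊆ T) (hA : #A ≤ k) (hAe : ¬ A ⊆ e.1) :
    ∃ S : KSet v k, A ⊆ S.1 ∧ S.1 ⊆ T ∧ G S = true := by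
  obtain ⟨S, hAS, hST, hS⟩ :=
    exists_subsuperset_card_eq hAT hA (show k ≤ #T by rw [hT.card_eq]; omega)
  refine ⟨⟨S, hS⟩, hAS, hST, (hT.edge_iff_of_update ?_ ?_).2 hST⟩
  · rintro rfl
    exact hAe hAS
  · rwa [inter_eq_left.2 hST, hS]

lemma exists_mem_notMem (hT : IsIsolatedClique t G T) (e : KSet v k) : ∃ x ∈ T, x ∉ e.1 :=
  exists_mem_notMem_of_card_lt_card (by rw [hT.card_eq, e.2]; omega)

lemma exists_subset_card_eq_not_subset (hT : IsIsolatedClique t G T) (ht : 0 < t) (htk : t ≤ k)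
    (e : KSet v k) : ∃ A ⊆ T, #A = t ∧ ¬ A ⊆ e.1 := by
  obtain ⟨x, hxT, hxe⟩ := hT.exists_mem_notMem e
  obtain ⟨A, hxA, hAT, hA⟩ := exists_subsuperset_card_eq (singleton_subset_iff.2 hxT)
    (by rwa [card_singleton]) (show t ≤ #T by rw [hT.card_eq]; omega)
  exact ⟨A, hAT, hA, fun h => hxe (h (singleton_subset_iff.1 hxA))⟩

lemma exists_mem_notMem_of_ne (hT : IsIsolatedClique t G T) (hT' : #T' = k + 1) (hne : T ≠ T') :
    ∃ x ∈ T, x ∉ T' :=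
  not_subset.1 fun hsub => hne (eq_of_subset_of_card_le hsub (by rw [hT.card_eq, hT']))

/-- An edge of `G` inside `T` that contains `A` and a vertex outside `T'` violates the isolation
of `T'`, so it must be the flipped edge `e'`. -/
lemma subset_of_update_of_ne (hT : IsIsolatedClique t (Function.update G e b) T)
    (hT' : IsIsolatedClique t (Function.update G e' b') T') (hne : T ≠ T') (htk : t < k)
    (hA : #A = t) (hAT : A ⊆ T) (hAT' : A ⊆ T') (hAe : ¬ A ⊆ e.1) : e'.1 ⊆ T := by
  obtain ⟨x, hxT, hxT'⟩ := hT.exists_mem_notMem_of_ne hT'.card_eq hne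
  obtain ⟨S, hAS, hST, hGS⟩ := hT.exists_edge_of_update (A := insert x A) htk.le
    (insert_subset hxT hAT) ((card_insert_le x A).trans (by omega))
    (fun h => hAe ((subset_insert x A).trans h))
  obtain ⟨hxS, hAS⟩ := insert_subset_iff.1 hAS
  have hSe' : S = e' := by
    by_contra hSe'
    have hmeet : t ≤ #(S.1 ∩ T') := hA ▸ card_le_card (subset_inter hAS hAT')
    exact hxT' ((hT'.edge_iff_of_update hSe' hmeet).1 hGS hxS)
  exact hSe' ▸ hST

end IsIsolatedClique

lemma isHypergraphProperty_hasIsolatedClique (v k t : ℕ) :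
    IsHypergraphProperty (hasIsolatedClique t : HGraph v k → Bool) := by
  intro σ G
  rw [Bool.eq_iff_iff, hasIsolatedClique_eq_true, hasIsolatedClique_eq_true]
  refine ⟨fun ⟨T, hT⟩ => ⟨T.map σ⁻¹.toEmbedding, ?_⟩, fun ⟨T, hT⟩ => ⟨_, hT.perm σ⟩⟩
  simpa only [permKSet_permKSet_inv] using hT.perm σ⁻¹

lemma localSens_le_of_eq_true (hG : hasIsolatedClique t G = true) :
    localSens (hasIsolatedClique t) G ≤ (k + 1).choose t * v.choose (k - t) := by
  obtain ⟨T, hT⟩ := hasIsolatedClique_eq_true.1 hG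
  rw [← hT.card_eq]
  refine (card_le_card fun e he => ?_).trans (card_kSet_le_card_inter_le t T)
  simp only [mem_filter, mem_univ, true_and, hG, ne_eq, Bool.not_eq_true] at he ⊢
  exact hT.le_card_inter_of_update_eq_false he

lemma localSens_le_of_eq_false (ht : 0 < t) (htk : t < k) (hG : hasIsolatedClique t G = false) :
    localSens (hasIsolatedClique t) G ≤ (k + 2) * v.choose t := by
  unfold localSens
  set s : Finset (KSet v k) :=
    {e | hasIsolatedClique t (Function.update G e (!G e)) ≠ hasIsolatedClique t G} with hs
  have hwitness : ∀ e ∈ s, ∃ T A, IsIsolatedClique t (Function.update G e (!G e)) T ∧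
      A ⊆ T ∧ #A = t ∧ ¬ A ⊆ e.1 := by
    intro e he
    obtain ⟨T, hT⟩ := hasIsolatedClique_eq_true.1 (by simpa [hs, hG] using he)
    obtain ⟨A, hA⟩ := hT.exists_subset_card_eq_not_subset ht htk.le e
    exact ⟨T, A, hT, hA⟩
  choose! T A hT hAT hA hAe using hwitness
  have hfiber : ∀ e ∈ s, {e' ∈ s | A e' = A e} ⊆
      insert e ({S | S.1 ⊆ T e} : Finset (KSet v k)) := by
    intro e he e' he'
    obtain ⟨he', hAA⟩ := mem_filter.1 he'
    by_cases hTT : T e = T e'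
    · have heq : e = e' := (hT e he).eq_of_update_of_update (hTT ▸ hT e' he')
        (hasIsolatedClique_eq_false.1 hG _)
      exact mem_insert.2 (Or.inl heq.symm)
    · refine mem_insert_of_mem (mem_filter.2 ⟨mem_univ _, ?_⟩)
      exact (hT e he).subset_of_update_of_ne (hT e' he') hTT htk (hA e he) (hAT e he)
        (hAA ▸ hAT e' he') (hAe e he)
  have hfiber_card : ∀ B ∈ s.image A, #{e ∈ s | A e = B} ≤ k + 2 := by
    intro B hB
    obtain ⟨e, he, rfl⟩ := mem_image.1 hB
    calc #{e' ∈ s | A e' = A e} ≤ #{S : KSet v k | S.1 ⊆ T e} + 1 :=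
          (card_le_card (hfiber e he)).trans (card_insert_le _ _)
      _ ≤ (#(T e)).choose k + 1 := by gcongr; exact card_kSet_subset_le _
      _ = k + 2 := by rw [(hT e he).card_eq, Nat.choose_succ_self_right]
  calc #s ≤ (k + 2) * #(s.image A) := card_le_mul_card_image s _ hfiber_card
    _ ≤ (k + 2) * #(powersetCard t (univ : Finset (Fin v))) := by
      gcongr
      exact image_subset_iff.2 fun e he => mem_powersetCard.2 ⟨subset_univ _, hA e he⟩
    _ = (k + 2) * v.choose t := by simp

lemma sens_hasIsolatedClique_le_max (v : ℕ) (ht : 0 < t) (htk : t < k) :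
    sens (hasIsolatedClique t : HGraph v k → Bool) ≤
      max ((k + 2) * v.choose t) ((k + 1).choose t * v.choose (k - t)) := by
  refine Finset.sup_le fun G _ => ?_
  cases hG : hasIsolatedClique t G
  · exact (localSens_le_of_eq_false ht htk hG).trans (le_max_left _ _)
  · exact (localSens_le_of_eq_true hG).trans (le_max_right _ _)

lemma hasIsolatedClique_update_cliqueOn (hk : 2 ≤ k) (htk : t ≤ k) (hT : #T = k + 1)
    (he : t ≤ #(e.1 ∩ T)) (heT : ¬ e.1 ⊆ T) :
    hasIsolatedClique t (Function.update (cliqueOn T) e (!cliqueOn T e)) = false := by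
  rw [hasIsolatedClique_eq_false]
  intro T' hT'
  by_cases hne : T' = T
  · subst hne
    simpa [cliqueOn, heT] using hT'.edge_iff e he
  · obtain ⟨x, hxT', hxT⟩ := hT'.exists_mem_notMem_of_ne hT hne
    obtain ⟨y, hyT', hye⟩ := hT'.exists_mem_notMem e
    obtain ⟨S, hxyS, -, hS⟩ := hT'.exists_edge_of_update (A := {x, y}) htk
      (by simp [insert_subset_iff, hxT', hyT']) (card_le_two.trans hk)
      (fun h => hye (h (by simp)))
    have hST : S.1 ⊆ T := of_decide_eq_true hS
    exact hxT (hST (hxyS (by simp)))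

lemma choose_le_sens_hasIsolatedClique (hk : 2 ≤ k) (htk : t < k) (hv : k + 1 ≤ v) :
    (v - (k + 1)).choose (k - t) ≤ sens (hasIsolatedClique t : HGraph v k → Bool) := by
  obtain ⟨T, -, hT⟩ := exists_subset_card_eq (s := (univ : Finset (Fin v))) (n := k + 1)
    (by simpa using hv)
  obtain ⟨A, hAT, hA⟩ := exists_subset_card_eq (show t ≤ #T by omega)
  have hcompl : #Tᶜ = v - (k + 1) := by rw [card_compl, Fintype.card_fin, hT]
  rw [← hcompl, ← card_powersetCard]
  refine le_trans ?_ (le_sup (f := localSens (hasIsolatedClique t)) (mem_univ (cliqueOn T)))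
  refine card_le_card_of_surjOn (fun S : KSet v k => S.1 \ T) fun B hB => ?_
  obtain ⟨hBT, hB⟩ := mem_powersetCard.1 hB
  have hdisj : Disjoint B T := disjoint_left.2 fun x hx => mem_compl.1 (hBT hx)
  have hcard : #(A ∪ B) = k := by
    rw [card_union_of_disjoint (hdisj.symm.mono_left hAT), hA, hB]
    omega
  have hmeet : t ≤ #((A ∪ B) ∩ T) := hA ▸ card_le_card (subset_inter subset_union_left hAT)
  have hnot_subset : ¬ A ∪ B ⊆ T := fun hsub => by
    obtain ⟨x, hx⟩ := card_pos.1 (show 0 < #B by omega)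
    exact disjoint_left.1 hdisj hx (hsub (mem_union_right _ hx))
  refine ⟨⟨A ∪ B, hcard⟩, mem_coe.2 (mem_filter.2 ⟨mem_univ _, ?_⟩), ?_⟩
  · rw [hasIsolatedClique_update_cliqueOn hk htk.le hT hmeet hnot_subset,
      hasIsolatedClique_eq_true.2 ⟨T, isIsolatedClique_cliqueOn hT⟩]
    exact Bool.false_ne_true
  · simp only [union_sdiff_distrib, sdiff_eq_empty_iff_subset.2 hAT, empty_union,
      sdiff_eq_self_of_disjoint hdisj]

lemma hasIsolatedClique_const_false (v : ℕ) (htk : t ≤ k) :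
    hasIsolatedClique t (fun _ : KSet v k => false) = false := by
  rw [hasIsolatedClique_eq_false]
  intro T hT
  obtain ⟨S, hST, hS⟩ := exists_subset_card_eq (show k ≤ #T by rw [hT.card_eq]; omega)
  simpa using (hT.edge_iff ⟨S, hS⟩ (by rwa [inter_eq_left.2 hST, hS])).2 hST

lemma flipBlock_const_false (T : Finset (Fin v)) :
    flipBlock (fun _ => false) {S : KSet v k | S.1 ⊆ T} = cliqueOn T := by
  funext S
  simp [flipBlock, cliqueOn]

lemma choose_le_mul_blockSens (v : ℕ) (htk : t ≤ k) :
    v.choose (k + 1) ≤ v * blockSens (hasIsolatedClique t : HGraph v k → Bool) := by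
  rcases Nat.eq_zero_or_pos v with rfl | hv
  · simp
  have : NeZero v := ⟨hv.ne'⟩
  have hclass : ∀ r : Fin v, #{T ∈ powersetCard (k + 1) univ | ∑ i ∈ T, i = r} ≤
      blockSens (hasIsolatedClique t : HGraph v k → Bool) := by
    intro r
    refine card_le_blockSens (x := fun _ => false) (B := fun T => {S : KSet v k | S.1 ⊆ T})
      (fun T hT => ?_) (fun T hT T' hT' hne => disjoint_left.2 fun S hS hS' => hne ?_)
    · have hcard := (mem_powersetCard.1 (mem_filter.1 hT).1).2
      rw [flipBlock_const_false, hasIsolatedClique_const_false v htk,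
        hasIsolatedClique_eq_true.2 ⟨T, isIsolatedClique_cliqueOn hcard⟩]
      exact Bool.false_ne_true.symm
    · simp only [mem_coe, mem_filter, mem_powersetCard] at hT hT'
      exact eq_of_sum_eq_of_subset (by rw [hT.1.2, S.2]) (by rw [hT'.1.2, S.2])
        (mem_filter.1 hS).2 (mem_filter.1 hS').2 (hT.2.trans hT'.2.symm)
  calc v.choose (k + 1) = #(powersetCard (k + 1) (univ : Finset (Fin v))) := by simp
    _ ≤ blockSens (hasIsolatedClique t : HGraph v k → Bool) * #(univ : Finset (Fin v)) :=
      card_le_mul_card_image_of_maps_to (fun T _ => mem_univ (∑ i ∈ T, i)) _ fun r _ => hclass r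
    _ = v * blockSens (hasIsolatedClique t : HGraph v k → Bool) := by simp [mul_comm]

end IsolatedCliques

section Asymptotics

variable {v k : ℕ}

lemma sens_hasIsolatedClique_half_le (hk : 2 ≤ k) (hv : 0 < v) :
    sens (hasIsolatedClique (k / 2) : HGraph v k → Bool) ≤ 2 ^ (k + 1) * v ^ ((k + 1) / 2) := by
  refine (sens_hasIsolatedClique_le_max v (by omega) (by omega)).trans (max_le ?_ ?_)
  · exact Nat.mul_le_mul Nat.lt_two_pow_self
      ((Nat.choose_le_pow v _).trans (Nat.pow_le_pow_right hv (by omega)))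
  · rw [show k - k / 2 = (k + 1) / 2 by omega]
    exact Nat.mul_le_mul (Nat.choose_le_two_pow _ _) (Nat.choose_le_pow v _)

lemma pow_le_mul_sens_hasIsolatedClique_half (hk : 2 ≤ k) (hv : 4 * k ≤ v) :
    v ^ ((k + 1) / 2) ≤ 2 ^ (k + 1) * (k + 1).factorial *
      sens (hasIsolatedClique (k / 2) : HGraph v k → Bool) := by
  have hchoose := choose_le_sens_hasIsolatedClique (v := v) (t := k / 2) hk (by omega) (by omega)
  rw [show k - k / 2 = (k + 1) / 2 by omega] at hchoose
  refine (pow_le_mul_choose (n := v - (k + 1)) (by omega)).trans ?_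
  gcongr <;> omega

lemma pow_le_mul_blockSens_hasIsolatedClique_half (hk : 2 ≤ k) (hv : 4 * k ≤ v) :
    v ^ k ≤ 2 ^ (k + 1) * (k + 1).factorial *
      blockSens (hasIsolatedClique (k / 2) : HGraph v k → Bool) := by
  have hchoose := choose_le_mul_blockSens (k := k) (t := k / 2) v (by omega)
  refine Nat.le_of_mul_le_mul_left ?_ (show 0 < v by omega)
  calc v * v ^ k = v ^ (k + 1) := (pow_succ' v k).symm
    _ ≤ 2 ^ (k + 1) * (k + 1).factorial * v.choose (k + 1) := pow_le_mul_choose (by omega)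
    _ ≤ 2 ^ (k + 1) * (k + 1).factorial * (v * blockSens (hasIsolatedClique (k / 2))) := by gcongr
    _ = _ := Nat.mul_left_comm _ _ _

lemma sq_sens_hasIsolatedClique_half_le (hk : 2 ≤ k) (hv : 4 * k ≤ v) :
    sens (hasIsolatedClique (k / 2) : HGraph v k → Bool) ^ 2 ≤
      (2 ^ (k + 1)) ^ 2 * (2 ^ (k + 1) * (k + 1).factorial) *
        (v ^ (k % 2) * blockSens (hasIsolatedClique (k / 2) : HGraph v k → Bool)) := by
  calc sens (hasIsolatedClique (k / 2) : HGraph v k → Bool) ^ 2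
      ≤ (2 ^ (k + 1) * v ^ ((k + 1) / 2)) ^ 2 := by
        gcongr
        exact sens_hasIsolatedClique_half_le hk (by omega)
    _ = (2 ^ (k + 1)) ^ 2 * (v ^ (k % 2) * v ^ k) := by
      rw [mul_pow, ← pow_mul v, ← pow_add, show (k + 1) / 2 * 2 = k % 2 + k by omega]
    _ ≤ (2 ^ (k + 1)) ^ 2 * (v ^ (k % 2) * (2 ^ (k + 1) * (k + 1).factorial *
          blockSens (hasIsolatedClique (k / 2) : HGraph v k → Bool))) := by
      gcongr
      exact pow_le_mul_blockSens_hasIsolatedClique_half hk hv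
    _ = _ := by ring

end Asymptotics

theorem stmt13_general (k : ℕ) (hk : 2 ≤ k) :
    ∃ f : (v : ℕ) → (HGraph v k → Bool),
      (∀ v, IsHypergraphProperty (f v)) ∧
      ∃ c C : ℝ, 0 < c ∧ 0 < C ∧ ∃ v₀ : ℕ,
        (∀ v : ℕ, v₀ ≤ v →
          (sens (f v) : ℝ) ≤ C * (v : ℝ) ^ ((k + 1) / 2 : ℕ) ∧
          c * (v : ℝ) ^ ((k + 1) / 2 : ℕ) ≤ (sens (f v) : ℝ) ∧
          c * (v : ℝ) ^ k ≤ (blockSens (f v) : ℝ)) ∧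
        ∃ c' : ℝ, 0 < c' ∧ ∀ v : ℕ, v₀ ≤ v →
          c' * (sens (f v) : ℝ) ^ 2 ≤ (v : ℝ) ^ (k % 2) * (blockSens (f v) : ℝ) := by
  have inv_mul_le {D a b : ℕ} (hD : 0 < D) (h : a ≤ D * b) : (D : ℝ)⁻¹ * a ≤ b := by
    rw [inv_mul_le_iff₀ (by exact_mod_cast hD)]
    exact_mod_cast h
  refine ⟨fun v => hasIsolatedClique (k / 2),
    fun v => isHypergraphProperty_hasIsolatedClique v k _,
    ((2 ^ (k + 1) * (k + 1).factorial : ℕ) : ℝ)⁻¹, 2 ^ (k + 1), by positivity, by positivity,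
    4 * k, fun v hv => ⟨?_, ?_, ?_⟩,
    (((2 ^ (k + 1)) ^ 2 * (2 ^ (k + 1) * (k + 1).factorial) : ℕ) : ℝ)⁻¹, by positivity,
    fun v hv => ?_⟩
  · exact_mod_cast sens_hasIsolatedClique_half_le hk (show 0 < v by omega)
  · exact_mod_cast inv_mul_le (by positivity) (pow_le_mul_sens_hasIsolatedClique_half hk hv)
  · exact_mod_cast inv_mul_le (by positivity) (pow_le_mul_blockSens_hasIsolatedClique_half hk hv)
  · exact_mod_cast inv_mul_le (by positivity) (sq_sens_hasIsolatedClique_half_le hk hv)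

theorem stmt13 (k : ℕ) (hk : 2 ≤ k) (hke : Even k) :
    ∃ f : (v : ℕ) → (HGraph v k → Bool),
      (∀ v, IsHypergraphProperty (f v)) ∧
      ∃ c C : ℝ, 0 < c ∧ 0 < C ∧ ∃ v₀ : ℕ,
        (∀ v : ℕ, v₀ ≤ v →
          (sens (f v) : ℝ) ≤ C * (v : ℝ) ^ (k / 2 : ℕ) ∧
          c * (v : ℝ) ^ (k / 2 : ℕ) ≤ (sens (f v) : ℝ) ∧
          c * (v : ℝ) ^ k ≤ (blockSens (f v) : ℝ)) ∧
        ∃ c' : ℝ, 0 < c' ∧ ∀ v : ℕ, v₀ ≤ v →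
          c' * (sens (f v) : ℝ) ^ 2 ≤ (blockSens (f v) : ℝ) := by
  have hceil : (k + 1) / 2 = k / 2 := by grind
  simpa only [hceil, Nat.even_iff.1 hke, pow_zero, one_mul] using stmt13_general k hk
end

section
/- For v ≥ 2, let f_v be the graph property on v vertices defined by f_v(G) = 1 iff G has an isolated vertex (a vertex incident to no edge of G). Then s(f_v) = v − 1. -/
open Finset

/-- The isolated-vertex graph property: some vertex is incident to no edge. -/
noncomputable def isolatedVertexProp (v : ℕ) : HGraph v 2 → Bool :=
  fun G => @decide (∃ a : Fin v, ∀ E : KSet v 2, G E = true → a ∉ E.1)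
    (Classical.propDecidable _)

/-! Flipping an edge only affects whether its own vertices are isolated. So if `a` is isolated,
every sensitive edge contains `a`, while if no vertex is isolated, every sensitive edge has a
private vertex, one that no other edge contains. A nonempty family of `k`-sets with private elements
has at most `v - k + 1` members, which for `k ≥ 2` is at most the number `(v - 1).choose (k - 1)` of
`k`-sets containing a given vertex. The latter bound is attained by the complete hypergraph on the
vertices other than `a`. -/

theorem sub_add_one_le_choose {n m : ℕ} (hm : 1 ≤ m) (hmn : m ≤ n) : n - m + 1 ≤ n.choose m :=
  calc n - m + 1 = (n - m + 1).choose (n - m) := (Nat.choose_succ_self_right _).symm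
    _ ≤ n.choose (n - m) := Nat.choose_le_choose _ (by omega)
    _ = n.choose m := Nat.choose_symm hmn

theorem card_add_card_le_of_forall_exists_private {ι α : Type*} [Fintype α]
    {A : ι → Finset α} {S : Finset ι} (hS : ∀ i ∈ S, ∃ a ∈ A i, ∀ j ∈ S, a ∈ A j → j = i)
    {i : ι} (hi : i ∈ S) : #S + #(A i) ≤ Fintype.card α + 1 := by
  classical
  have : Nonempty α := ⟨(hS i hi).choose⟩
  choose! c hc hprivate using hS
  have hmaps : Set.MapsTo c (S.erase i) ((A i)ᶜ : Finset α) := fun j hj ↦ by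
    obtain ⟨hji, hj⟩ := mem_erase.1 hj
    exact mem_compl.2 fun hcj ↦ hji (hprivate j hj i hi hcj).symm
  have hinj : Set.InjOn c (S.erase i) := fun j hj l hl hjl ↦
    hprivate l (mem_of_mem_erase hl) j (mem_of_mem_erase hj) (hjl ▸ hc j (mem_of_mem_erase hj))
  have hcard : #(S.erase i) ≤ #(A i)ᶜ := card_le_card_of_injOn c hmaps hinj
  have hcardS : #(S.erase i) + 1 = #S := card_erase_add_one hi
  have hcardA : #(A i) + #(A i)ᶜ = Fintype.card α := card_add_card_compl _
  omega

theorem localSens_le_sens {I : Type} [Fintype I] [DecidableEq I] (f : (I → Bool) → Bool)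
    (x : I → Bool) : localSens f x ≤ sens f :=
  le_sup (mem_univ x)

section Hypergraph

variable {v k : ℕ}

theorem card_kSet_filter_mem (hk : 1 ≤ k) (a : Fin v) :
    #{E : KSet v k | a ∈ E.1} = (v - 1).choose (k - 1) := by
  have hmap : ({E : KSet v k | a ∈ E.1} : Finset _).map (.subtype _) =
      (powersetCard k univ).filter ({a} ⊆ ·) := by
    ext E
    simp [and_comm]
  rw [← card_map, hmap, card_filter_powersetCard_subset] <;> simp [hk]

theorem card_le_choose_of_forall_exists_private (hk : 2 ≤ k) {S : Finset (KSet v k)}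
    (hS : ∀ E ∈ S, ∃ a ∈ E.1, ∀ E' ∈ S, a ∈ E'.1 → E' = E) :
    #S ≤ (v - 1).choose (k - 1) := by
  obtain rfl | ⟨E, hE⟩ := S.eq_empty_or_nonempty
  · simp
  have hkv : k ≤ v := by simpa [E.2] using card_le_univ E.1
  have hcard : #S + k ≤ v + 1 := by
    simpa [E.2] using card_add_card_le_of_forall_exists_private (A := Subtype.val) hS hE
  calc #S ≤ v - 1 - (k - 1) + 1 := by omega
    _ ≤ (v - 1).choose (k - 1) := sub_add_one_le_choose (by omega) (by omega)

/-- The vertex `a` is isolated in the hypergraph `G`: no edge of `G` contains it. -/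
def IsIsolated (G : HGraph v k) (a : Fin v) : Prop :=
  ∀ E : KSet v k, G E = true → a ∉ E.1

/-- The property of having an isolated vertex, for `k`-uniform hypergraphs. It agrees definitionally
with `isolatedVertexProp` for `k = 2`, hence the same choice of decidability instance. -/
noncomputable def hasIsolatedVertex (v k : ℕ) : HGraph v k → Bool :=
  fun G ↦ @decide (∃ a, IsIsolated G a) (Classical.propDecidable _)

theorem hasIsolatedVertex_eq_true_iff {G : HGraph v k} :
    hasIsolatedVertex v k G = true ↔ ∃ a, IsIsolated G a := by
  simp [hasIsolatedVertex]

theorem hasIsolatedVertex_eq_false_iff {G : HGraph v k} :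
    hasIsolatedVertex v k G = false ↔ ∀ a, ¬ IsIsolated G a := by
  simp [hasIsolatedVertex]

theorem isIsolated_update_iff {G : HGraph v k} {E : KSet v k} {a : Fin v} (haE : a ∉ E.1)
    (b : Bool) : IsIsolated (Function.update G E b) a ↔ IsIsolated G a := by
  refine forall_congr' fun E' ↦ ?_
  obtain rfl | hne := eq_or_ne E' E
  · simp [haE]
  · rw [Function.update_of_ne hne]

theorem eq_of_isIsolated_update {G : HGraph v k} {E E' : KSet v k} {a : Fin v} {b : Bool}
    (ha : IsIsolated (Function.update G E b) a) (hE' : G E' = true) (haE' : a ∈ E'.1) :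
    E' = E := by
  by_contra hne
  exact ha E' (by rwa [Function.update_of_ne hne]) haE'

theorem localSens_hasIsolatedVertex_le_of_isIsolated (hk : 1 ≤ k) {G : HGraph v k} {a : Fin v}
    (ha : IsIsolated G a) : localSens (hasIsolatedVertex v k) G ≤ (v - 1).choose (k - 1) := by
  rw [← card_kSet_filter_mem hk a]
  refine card_le_card <| monotone_filter_right _ fun E _ hE ↦ ?_
  by_contra haE
  refine hE ?_
  rw [hasIsolatedVertex_eq_true_iff.2 ⟨a, ha⟩, hasIsolatedVertex_eq_true_iff]
  exact ⟨a, (isIsolated_update_iff haE _).2 ha⟩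

theorem localSens_hasIsolatedVertex_le_of_forall_not_isIsolated (hk : 2 ≤ k) {G : HGraph v k}
    (hG : ∀ a, ¬ IsIsolated G a) :
    localSens (hasIsolatedVertex v k) G ≤ (v - 1).choose (k - 1) := by
  have hsens : ∀ E : KSet v k,
      hasIsolatedVertex v k (Function.update G E (!G E)) ≠ hasIsolatedVertex v k G →
        G E = true ∧ ∃ a ∈ E.1, ∀ E' : KSet v k, G E' = true → a ∈ E'.1 → E' = E := by
    intro E hE
    rw [hasIsolatedVertex_eq_false_iff.2 hG, Bool.ne_false_iff,
      hasIsolatedVertex_eq_true_iff] at hE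
    obtain ⟨a, ha⟩ := hE
    obtain ⟨E', hE', haE'⟩ : ∃ E' : KSet v k, G E' = true ∧ a ∈ E'.1 := by
      simpa [IsIsolated] using hG a
    obtain rfl : E' = E := eq_of_isIsolated_update ha hE' haE'
    exact ⟨hE', a, haE', fun _ ↦ eq_of_isIsolated_update ha⟩
  refine card_le_choose_of_forall_exists_private hk fun E hE ↦ ?_
  obtain ⟨-, a, haE, hprivate⟩ := hsens E (mem_filter.1 hE).2
  exact ⟨a, haE, fun E' hE' ↦ hprivate E' (hsens E' (mem_filter.1 hE').2).1⟩

theorem localSens_hasIsolatedVertex_le (hk : 2 ≤ k) (G : HGraph v k) :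
    localSens (hasIsolatedVertex v k) G ≤ (v - 1).choose (k - 1) := by
  by_cases hG : ∃ a, IsIsolated G a
  · obtain ⟨a, ha⟩ := hG
    exact localSens_hasIsolatedVertex_le_of_isIsolated (by omega) ha
  · exact localSens_hasIsolatedVertex_le_of_forall_not_isIsolated hk (not_exists.1 hG)

/-- The complete `k`-uniform hypergraph on the vertices other than `a`, which maximizes the
sensitivity of `hasIsolatedVertex`. -/
def completeAvoiding (k : ℕ) (a : Fin v) : HGraph v k :=
  fun E ↦ decide (a ∉ E.1)

theorem isIsolated_completeAvoiding (k : ℕ) (a : Fin v) : IsIsolated (completeAvoiding k a) a :=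
  fun _ hE ↦ of_decide_eq_true hE

theorem not_isIsolated_update_completeAvoiding {a : Fin v} {E : KSet v k} (haE : a ∈ E.1)
    (c : Fin v) : ¬ IsIsolated (Function.update (completeAvoiding k a) E true) c := by
  intro hc
  by_cases hcE : c ∈ E.1
  · exact hc E (by simp) hcE
  · -- Exchanging `a` for `c` in `E` gives an edge of `completeAvoiding k a` that contains `c`.
    let E' : KSet v k := ⟨insert c (E.1.erase a), by
      rw [card_insert_of_notMem (mt mem_of_mem_erase hcE), card_erase_add_one haE, E.2]⟩
    have haE' : a ∉ E'.1 := by simp [E', ne_of_mem_of_not_mem haE hcE]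
    refine (isIsolated_update_iff hcE true).1 hc E' ?_ (mem_insert_self c _)
    exact decide_eq_true haE'

theorem choose_le_localSens_completeAvoiding (hk : 1 ≤ k) (a : Fin v) :
    (v - 1).choose (k - 1) ≤ localSens (hasIsolatedVertex v k) (completeAvoiding k a) := by
  rw [← card_kSet_filter_mem hk a]
  refine card_le_card <| monotone_filter_right _ fun E _ haE ↦ ?_
  have hflip : (!completeAvoiding k a E) = true := by simpa [completeAvoiding] using haE
  rw [hflip, hasIsolatedVertex_eq_false_iff.2 (not_isIsolated_update_completeAvoiding haE),
    hasIsolatedVertex_eq_true_iff.2 ⟨a, isIsolated_completeAvoiding k a⟩]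
  exact Bool.false_ne_true

end Hypergraph

theorem stmt16_general (v k : ℕ) (hk : 2 ≤ k) :
    sens (hasIsolatedVertex v k) = (v - 1).choose (k - 1) := by
  refine le_antisymm (Finset.sup_le fun G _ ↦ localSens_hasIsolatedVertex_le hk G) ?_
  obtain rfl | hv := v.eq_zero_or_pos
  · simp [Nat.choose_eq_zero_of_lt (show 0 < k - 1 by omega)]
  · exact (choose_le_localSens_completeAvoiding (by omega) ⟨0, hv⟩).trans (localSens_le_sens _ _)

theorem stmt16 (v : ℕ) (hv : 2 ≤ v) :
    sens (isolatedVertexProp v) = v - 1 :=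
  (stmt16_general v 2 le_rfl).trans (Nat.choose_one_right _)
end

section
/- Fix integers k ≥ 2, m > k, 1 ≤ i < k, and v ≥ m + k, let f be the (m,i)-isolated-clique property on v vertices, fix an m-element vertex set H ⊆ Fin v, and let G be the k-uniform hypergraph whose edges are exactly all k-element subsets of H. Then f(G) = 1 and s(f, G) = C(m,k) + |{E : E is a k-element subset of Fin v, E ⊄ H, and |E ∩ H| ≥ i}|, where C(m,k) is the binomial coefficient; in particular s¹(f) ≥ C(m,k) + C(m,i)·C(v−m, k−i). -/
open Finset

/-- `W` is a witness for the `(m,i)`-isolated-clique property in `G`: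
`W` is an `m`-set, every `k`-subset of `W` is an edge, and every edge not inside `W`
meets `W` in fewer than `i` vertices. -/
def IsWitness {v k : ℕ} (m i : ℕ) (G : HGraph v k) (W : Finset (Fin v)) : Prop :=
  W.card = m ∧
  (∀ E : KSet v k, E.1 ⊆ W → G E = true) ∧
  (∀ E : KSet v k, G E = true → ¬ E.1 ⊆ W → (E.1 ∩ W).card < i)

/-- The `(m,i)`-isolated-clique property. -/
noncomputable def isoCliqueProp (v k m i : ℕ) : HGraph v k → Bool :=
  fun G => @decide (∃ W : Finset (Fin v), IsWitness m i G W) (Classical.propDecidable _)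

/-- An `m`-set `W` is a sensitive tuple for `G` if flipping a single `k`-set makes `W`
a witness. -/
def SensitiveTuple {v k : ℕ} (m i : ℕ) (G : HGraph v k) (W : Finset (Fin v)) : Prop :=
  W.card = m ∧ ∃ E : KSet v k, IsWitness m i (Function.update G E (!G E)) W

/-!
Flipping a `k`-set inside `H` destroys the clique on `H`, and flipping one outside `H` preserves
the witness `H` exactly when the new edge meets `H` in fewer than `i` vertices. No other set can
become a witness: two vertices `x`, `y` of an `m`-clique `W` with `y` outside the flipped set lie
in a common `k`-subset of `W`, which is an edge unaffected by the flip and so is contained in `H`;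
as `x` is arbitrary, `W ⊆ H`. For the lower bound it suffices to count the `k`-sets that meet `H`
in exactly `i` vertices.
-/

section Counting

theorem card_filter_powersetCard_union_card_inter_eq {α : Type*} [DecidableEq α] {s t : Finset α}
    (hst : Disjoint s t) (i j : ℕ) :
    #{E ∈ powersetCard (i + j) (s ∪ t) | #(E ∩ s) = i} = (#s).choose i * (#t).choose j := by
  have inter_left {A B : Finset α} (hA : A ⊆ s) (hB : B ⊆ t) : (A ∪ B) ∩ s = A := by
    rw [union_inter_distrib_right, inter_eq_left.2 hA,
      disjoint_iff_inter_eq_empty.1 (hst.symm.mono_left hB), union_empty]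
  have sdiff_left {A B : Finset α} (hA : A ⊆ s) (hB : B ⊆ t) : (A ∪ B) \ s = B := by
    rw [union_sdiff_distrib, sdiff_eq_empty_iff_subset.2 hA,
      sdiff_eq_self_of_disjoint (hst.symm.mono_left hB), empty_union]
  rw [← card_powersetCard i s, ← card_powersetCard j t, ← card_product]
  refine card_nbij' (fun E => (E ∩ s, E \ s)) (fun p => p.1 ∪ p.2) ?_ ?_ ?_ ?_
  · intro E hE
    obtain ⟨⟨hEst, hEcard⟩, hEs⟩ := by simpa only [coe_filter, Set.mem_ofPred_eq,
      mem_powersetCard] using hE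
    have hEt : #(E \ s) = j := by
      have := card_inter_add_card_sdiff E s
      omega
    simp only [mem_coe, mem_product, mem_powersetCard]
    exact ⟨⟨inter_subset_right, hEs⟩, sdiff_le_iff.2 hEst, hEt⟩
  · rintro ⟨A, B⟩ hAB
    obtain ⟨⟨hA, hAi⟩, hB, hBj⟩ := by simpa only [mem_coe, mem_product,
      mem_powersetCard] using hAB
    simp only [coe_filter, Set.mem_ofPred_eq, mem_powersetCard]
    refine ⟨⟨union_subset_union hA hB, ?_⟩, by rw [inter_left hA hB, hAi]⟩
    rw [card_union_of_disjoint (hst.mono hA hB), hAi, hBj]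
  · intro E _
    exact sup_inf_sdiff E s
  · rintro ⟨A, B⟩ hAB
    obtain ⟨⟨hA, -⟩, hB, -⟩ := by simpa only [mem_coe, mem_product,
      mem_powersetCard] using hAB
    exact Prod.ext (inter_left hA hB) (sdiff_left hA hB)

variable {v k : ℕ}

theorem card_filter_kSet (p : Finset (Fin v) → Prop) [DecidablePred p] :
    #{E : KSet v k | p E.1} = #{E ∈ powersetCard k univ | p E} := by
  refine card_bij (fun E _ => E.1) (fun E hE => ?_) (fun E _ F _ h => Subtype.ext h)
    (fun S hS => ?_)
  · exact mem_filter.2 ⟨mem_powersetCard_univ.2 E.2, (mem_filter.1 hE).2⟩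
  · obtain ⟨hScard, hSp⟩ := mem_filter.1 hS
    exact ⟨⟨S, mem_powersetCard_univ.1 hScard⟩, mem_filter.2 ⟨mem_univ _, hSp⟩, rfl⟩

theorem card_filter_kSet_subset (H : Finset (Fin v)) :
    #{E : KSet v k | E.1 ⊆ H} = (#H).choose k := by
  rw [card_filter_kSet (· ⊆ H), ← card_powersetCard]
  congr 1
  ext E
  simp [mem_powersetCard, and_comm]

theorem card_filter_kSet_card_inter_eq {i : ℕ} (hik : i ≤ k) (H : Finset (Fin v)) :
    #{E : KSet v k | #(E.1 ∩ H) = i} = (#H).choose i * (v - #H).choose (k - i) := by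
  have hcompl : #Hᶜ = v - #H := by rw [card_compl, Fintype.card_fin]
  rw [card_filter_kSet (fun E => #(E ∩ H) = i), ← hcompl,
    ← card_filter_powersetCard_union_card_inter_eq disjoint_compl_right, union_compl,
    Nat.add_sub_cancel' hik]

theorem choose_mul_choose_le_card_filter_kSet {i : ℕ} (hik : i < k) (H : Finset (Fin v)) :
    (#H).choose i * (v - #H).choose (k - i) ≤
      #{E : KSet v k | ¬ E.1 ⊆ H ∧ i ≤ #(E.1 ∩ H)} := by
  rw [← card_filter_kSet_card_inter_eq hik.le]
  refine card_le_card (monotone_filter_right _ fun E _ hE => ⟨fun hEH => ?_, hE.ge⟩)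
  rw [inter_eq_left.2 hEH, E.2] at hE
  exact hik.ne' hE

end Counting

theorem localSens_le_sensOn {I : Type} [Fintype I] [DecidableEq I] {f : (I → Bool) → Bool}
    {x : I → Bool} {b : Bool} (hx : f x = b) : localSens f x ≤ sensOn b f :=
  le_sup (f := localSens f) (mem_filter.2 ⟨mem_univ x, hx⟩)

section IsolatedClique

variable {v k m i : ℕ} {G : HGraph v k} {H W : Finset (Fin v)}

theorem isoCliqueProp_eq_true_iff :
    isoCliqueProp v k m i G = true ↔ ∃ W : Finset (Fin v), IsWitness m i G W :=
  @decide_eq_true_iff _ (Classical.propDecidable _)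

theorem IsWitness.update_not_iff (hW : IsWitness m i G W) (E : KSet v k) :
    IsWitness m i (Function.update G E (!G E)) W ↔ ¬ E.1 ⊆ W ∧ #(E.1 ∩ W) < i := by
  obtain ⟨hcard, hclique, hisolated⟩ := hW
  constructor
  · rintro ⟨-, hclique', hisolated'⟩
    have hEW : ¬ E.1 ⊆ W := fun hEW => by simpa [hclique E hEW] using hclique' E hEW
    refine ⟨hEW, ?_⟩
    cases hGE : G E with
    | true => exact hisolated E hGE hEW
    | false => exact hisolated' E (by simp [hGE]) hEW
  · rintro ⟨hEW, hlt⟩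
    refine ⟨hcard, fun F hFW => ?_, fun F hF hFW => ?_⟩
    · rw [Function.update_of_ne (by rintro rfl; exact hEW hFW)]
      exact hclique F hFW
    · obtain rfl | hFE := eq_or_ne F E
      · exact hlt
      · rw [Function.update_of_ne hFE] at hF
        exact hisolated F hF hFW

theorem IsWitness.subset_of_update (hk : 2 ≤ k) (hm : k < m)
    (hG : ∀ E : KSet v k, G E = true → E.1 ⊆ H) {E : KSet v k} {b : Bool}
    (hW : IsWitness m i (Function.update G E b) W) : W ⊆ H := by
  obtain ⟨hcard, hclique, -⟩ := hW
  intro x hx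
  obtain ⟨y, hyW, hyE⟩ : ∃ y ∈ W, y ∉ E.1 :=
    exists_mem_notMem_of_card_lt_card (by rwa [E.2, hcard])
  obtain ⟨S, hxyS, hSW, hS⟩ : ∃ S, {x, y} ⊆ S ∧ S ⊆ W ∧ #S = k :=
    exists_subsuperset_card_eq (insert_subset hx (singleton_subset_iff.2 hyW))
      (card_le_two.trans hk) (by omega)
  obtain ⟨hxS, hyS⟩ : x ∈ S ∧ y ∈ S := by
    simpa only [insert_subset_iff, singleton_subset_iff] using hxyS
  have hne : (⟨S, hS⟩ : KSet v k) ≠ E := by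
    rintro rfl
    exact hyE hyS
  have hedge : G ⟨S, hS⟩ = true := by
    rw [← Function.update_of_ne hne b G]
    exact hclique ⟨S, hS⟩ hSW
  exact hG _ hedge hxS

theorem isWitness_of_forall_iff_subset (hH : #H = m)
    (hG : ∀ E : KSet v k, G E = true ↔ E.1 ⊆ H) : IsWitness m i G H :=
  ⟨hH, fun E => (hG E).2, fun E hE hEH => absurd ((hG E).1 hE) hEH⟩

theorem isoCliqueProp_update_not_eq_true_iff (hk : 2 ≤ k) (hm : k < m) (hH : #H = m)
    (hG : ∀ E : KSet v k, G E = true ↔ E.1 ⊆ H) (E : KSet v k) :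
    isoCliqueProp v k m i (Function.update G E (!G E)) = true ↔
      ¬ E.1 ⊆ H ∧ #(E.1 ∩ H) < i := by
  rw [isoCliqueProp_eq_true_iff, ← (isWitness_of_forall_iff_subset hH hG).update_not_iff]
  refine ⟨fun ⟨W, hW⟩ => ?_, fun h => ⟨H, h⟩⟩
  have hWH : W = H :=
    eq_of_subset_of_card_le (hW.subset_of_update hk hm fun F => (hG F).1) (by rw [hH, hW.1])
  exact hWH ▸ hW

theorem localSens_isoCliqueProp (hk : 2 ≤ k) (hm : k < m) (hH : #H = m)
    (hG : ∀ E : KSet v k, G E = true ↔ E.1 ⊆ H) :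
    localSens (isoCliqueProp v k m i) G =
      m.choose k + #{E : KSet v k | ¬ E.1 ⊆ H ∧ i ≤ #(E.1 ∩ H)} := by
  have htrue : isoCliqueProp v k m i G = true :=
    isoCliqueProp_eq_true_iff.2 ⟨H, isWitness_of_forall_iff_subset hH hG⟩
  have hflip (E : KSet v k) :
      isoCliqueProp v k m i (Function.update G E (!G E)) ≠ isoCliqueProp v k m i G ↔
        E.1 ⊆ H ∨ (¬ E.1 ⊆ H ∧ i ≤ #(E.1 ∩ H)) := by
    rw [htrue, Ne, isoCliqueProp_update_not_eq_true_iff hk hm hH hG, ← not_lt]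
    tauto
  have hdisj : Disjoint (univ.filter fun E : KSet v k => E.1 ⊆ H)
      (univ.filter fun E : KSet v k => ¬ E.1 ⊆ H ∧ i ≤ #(E.1 ∩ H)) :=
    disjoint_filter.2 fun E _ hE hE' => hE'.1 hE
  rw [localSens, filter_congr fun E _ => hflip E, filter_or, card_union_of_disjoint hdisj,
    card_filter_kSet_subset, hH]

end IsolatedClique

theorem stmt17_general (v k m i : ℕ) (hk : 2 ≤ k) (hm : k < m) (hik : i < k)
    (H : Finset (Fin v)) (hH : H.card = m)
    (G : HGraph v k) (hGdef : ∀ E : KSet v k, G E = true ↔ E.1 ⊆ H) :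
    isoCliqueProp v k m i G = true ∧
    localSens (isoCliqueProp v k m i) G =
      Nat.choose m k +
        (Finset.univ.filter
          (fun E : KSet v k => ¬ E.1 ⊆ H ∧ i ≤ (E.1 ∩ H).card)).card ∧
    Nat.choose m k + Nat.choose m i * Nat.choose (v - m) (k - i) ≤
      sensOn true (isoCliqueProp v k m i) := by
  have htrue : isoCliqueProp v k m i G = true :=
    isoCliqueProp_eq_true_iff.2 ⟨H, isWitness_of_forall_iff_subset hH hGdef⟩
  refine ⟨htrue, localSens_isoCliqueProp hk hm hH hGdef, ?_⟩
  calc m.choose k + m.choose i * (v - m).choose (k - i)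
    _ ≤ m.choose k + #{E : KSet v k | ¬ E.1 ⊆ H ∧ i ≤ #(E.1 ∩ H)} := by
      rw [← hH]
      exact Nat.add_le_add_left (choose_mul_choose_le_card_filter_kSet hik H) _
    _ = localSens (isoCliqueProp v k m i) G := (localSens_isoCliqueProp hk hm hH hGdef).symm
    _ ≤ sensOn true (isoCliqueProp v k m i) := localSens_le_sensOn htrue

theorem stmt17 (v k m i : ℕ) (hk : 2 ≤ k) (hm : k < m) (hi1 : 1 ≤ i) (hik : i < k)
    (hv : m + k ≤ v) (H : Finset (Fin v)) (hH : H.card = m)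
    (G : HGraph v k) (hGdef : ∀ E : KSet v k, G E = true ↔ E.1 ⊆ H) :
    isoCliqueProp v k m i G = true ∧
    localSens (isoCliqueProp v k m i) G =
      Nat.choose m k +
        (Finset.univ.filter
          (fun E : KSet v k => ¬ E.1 ⊆ H ∧ i ≤ (E.1 ∩ H).card)).card ∧
    Nat.choose m k + Nat.choose m i * Nat.choose (v - m) (k - i) ≤
      sensOn true (isoCliqueProp v k m i) :=
  stmt17_general v k m i hk hm hik H hH G hGdef
end
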